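/- Let k ≥ 1 and d > h ≥ 2 be positive integers and let G = (U,V,E) be a bipartite graph with d(u) ≤ d for all u ∈ U. Suppose that for every subset S of U, |Γ(S)| ≥ (h - 1 + (d - h + 1)/(k + 1 + (d - h - 1)·⌈k/h⌉))·|S|. Then G has an (h, hk)-matching. -/

import Mathlib

open scoped Classical

noncomputable section

variable {U V : Type*}

/-- The neighbourhood `Γ(S) ⊆ V` of a set `S` of left vertices of the bipartite
graph with edge set `E ⊆ U × V`. -/
def nbhd (E : Finset (U × V)) (S : Finset U) : Finset V :=
  (E.filter fun p => p.1 ∈ S).image Prod.snd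

/-- The neighbourhood `Γ(T) ⊆ U` of a set `T` of right vertices. -/
def nbhdR (E : Finset (U × V)) (T : Finset V) : Finset U :=
  (E.filter fun p => p.2 ∈ T).image Prod.fst

/-- The degree of a left vertex `u` in the bipartite graph with edge set `E`. -/
def degL (E : Finset (U × V)) (u : U) : ℕ := (E.filter fun p => p.1 = u).card

/-- The degree of a right vertex `v` in the bipartite graph with edge set `E`. -/
def degR (E : Finset (U × V)) (v : V) : ℕ := (E.filter fun p => p.2 = v).card

/-- The bipartite graph on the vertex set `U ⊕ V` determined by an edge set
`F ⊆ U × V`. -/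
def mkGraph (F : Finset (U × V)) : SimpleGraph (U ⊕ V) :=
  SimpleGraph.fromRel fun x y => ∃ p ∈ F, x = Sum.inl p.1 ∧ y = Sum.inr p.2

/-- The edges of `F` lying inside the connected component `c` of `mkGraph F`. -/
def componentEdges (F : Finset (U × V)) (c : (mkGraph F).ConnectedComponent) :
    Finset (U × V) :=
  F.filter fun p => (mkGraph F).connectedComponentMk (Sum.inl p.1) = c

/-- An `(s,t)`-matching in the bipartite graph `G = (U,V,E)`: a subset `F ⊆ E` such
that in `H = (U,V,F)` every connected component is a tree (i.e. `H` is acyclic) with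
at most `t` edges, and every vertex `u ∈ U` has degree exactly `s` in `H`. -/
def IsSTMatching (s t : ℕ) (E F : Finset (U × V)) : Prop :=
  F ⊆ E ∧ (mkGraph F).IsAcyclic ∧
    (∀ c : (mkGraph F).ConnectedComponent, (componentEdges F c).card ≤ t) ∧
    ∀ u : U, degL F u = s

lemma adj_lr (F : Finset (U × V)) (u : U) (v : V) :
    (mkGraph F).Adj (Sum.inl u) (Sum.inr v) ↔ (u, v) ∈ F := by
  simp [mkGraph, SimpleGraph.fromRel_adj]

lemma reach_edge {F : Finset (U × V)} {u : U} {v : V} (h : (u, v) ∈ F) :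
    (mkGraph F).Reachable (Sum.inl u) (Sum.inr v) :=
  ((adj_lr F u v).2 h).reachable

lemma mkGraph_mono {F F' : Finset (U × V)} (h : F ⊆ F') : mkGraph F ≤ mkGraph F' := by
  intro a b hab
  simp only [mkGraph, SimpleGraph.fromRel_adj] at hab ⊢
  refine ⟨hab.1, hab.2.imp ?_ ?_⟩ <;>
  · rintro ⟨p, hp, h1⟩
    exact ⟨p, h hp, h1⟩

lemma reach_mono {F F' : Finset (U × V)} (h : F ⊆ F') {y z : U ⊕ V}
    (hr : (mkGraph F).Reachable y z) : (mkGraph F').Reachable y z :=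
  hr.mono (mkGraph_mono h)

lemma reach_induct {F : Finset (U × V)} (P : U ⊕ V → Prop) {y z : U ⊕ V}
    (hP : ∀ u v, (u, v) ∈ F → (P (Sum.inl u) ↔ P (Sum.inr v)))
    (hr : (mkGraph F).Reachable y z) (hy : P y) : P z := by
  obtain ⟨w⟩ := hr
  induction w with
  | nil => exact hy
  | cons hab _ ih =>
    apply ih
    simp only [mkGraph, SimpleGraph.fromRel_adj] at hab
    rcases hab.2 with ⟨p, hp, rfl, rfl⟩ | ⟨p, hp, rfl, rfl⟩
    · exact (hP _ _ hp).1 hy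
    · exact (hP _ _ hp).2 hy

/-- delete all edges at `u`. -/
def delU (F : Finset (U × V)) (u : U) : Finset (U × V) := F.filter fun p => p.1 ≠ u

/-- the star at `u` with leaves `X`. -/
def starU (u : U) (X : Finset V) : Finset (U × V) := X.image fun x => (u, x)

/-- neighbours of `u` in `F`. -/
def nbU (F : Finset (U × V)) (u : U) : Finset V := (F.filter fun p => p.1 = u).image Prod.snd

/-- `v` and `w` in the same component. -/
def RV (F : Finset (U × V)) (v w : V) : Prop := (mkGraph F).Reachable (Sum.inr v) (Sum.inr w)

/-- `v` and `u` in the same component. -/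
def RU (F : Finset (U × V)) (v : V) (u : U) : Prop :=
  (mkGraph F).Reachable (Sum.inr v) (Sum.inl u)

lemma RV.rfl' {F : Finset (U × V)} {v : V} : RV F v v := SimpleGraph.Reachable.refl _
lemma RV.symm {F : Finset (U × V)} {v w : V} (h : RV F v w) : RV F w v :=
  SimpleGraph.Reachable.symm h
lemma RV.trans {F : Finset (U × V)} {v w x : V} (h : RV F v w) (h' : RV F w x) : RV F v x :=
  SimpleGraph.Reachable.trans h h'
lemma RV.transU {F : Finset (U × V)} {v w : V} {u : U} (h : RV F v w) (h' : RU F w u) :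
    RU F v u := SimpleGraph.Reachable.trans h h'
lemma RU.link {F : Finset (U × V)} {v w : V} {u : U} (h : RU F v u) (h' : RU F w u) :
    RV F v w := SimpleGraph.Reachable.trans h (SimpleGraph.Reachable.symm h')
lemma RU.edge {F : Finset (U × V)} {v : V} {u : U} (h : (u, v) ∈ F) : RU F v u :=
  (reach_edge h).symm
lemma RV.mono {F F' : Finset (U × V)} (hF : F ⊆ F') {v w : V} (h : RV F v w) : RV F' v w :=
  reach_mono hF h
lemma RU.mono {F F' : Finset (U × V)} (hF : F ⊆ F') {v : V} {w : U} (h : RU F v w) :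
    RU F' v w := reach_mono hF h

lemma mem_nbU {F : Finset (U × V)} {u : U} {v : V} : v ∈ nbU F u ↔ (u, v) ∈ F := by
  simp [nbU]

lemma mem_delU {F : Finset (U × V)} {u : U} {p : U × V} : p ∈ delU F u ↔ p ∈ F ∧ p.1 ≠ u := by
  simp [delU]

lemma mem_starU {u : U} {X : Finset V} {p : U × V} :
    p ∈ starU u X ↔ p.1 = u ∧ p.2 ∈ X := by
  obtain ⟨a, b⟩ := p
  simp only [starU, Finset.mem_image, Prod.mk.injEq]
  constructor
  · rintro ⟨x, hx, rfl, rfl⟩; exact ⟨rfl, hx⟩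
  · rintro ⟨rfl, h⟩; exact ⟨b, h, rfl, rfl⟩

lemma del_union_star (F : Finset (U × V)) (u : U) : delU F u ∪ starU u (nbU F u) = F := by
  ext ⟨a, b⟩
  simp only [Finset.mem_union, mem_delU, mem_starU, mem_nbU]
  by_cases h : a = u
  · subst h; simp
  · simp [h]

lemma delU_sub (F : Finset (U × V)) (u : U) : delU F u ⊆ F := Finset.filter_subset _ _

/-- the master reachability lemma for attaching a star. -/
lemma star_reach {F : Finset (U × V)} {u : U} (X : Finset V) (h0 : ∀ v, (u, v) ∉ F)
    {v : V} {z : U ⊕ V} (hr : (mkGraph (F ∪ starU u X)).Reachable (Sum.inr v) z) :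
    (z = Sum.inl u ∧ ∃ x ∈ X, RV F v x) ∨ (z ≠ Sum.inl u ∧
      ((mkGraph F).Reachable (Sum.inr v) z ∨
        (∃ x ∈ X, RV F v x) ∧ ∃ x ∈ X, (mkGraph F).Reachable (Sum.inr x) z)) := by
  refine reach_induct (F := F ∪ starU u X) (y := Sum.inr v) (z := z)
    (fun z => (z = Sum.inl u ∧ ∃ x ∈ X, RV F v x) ∨ (z ≠ Sum.inl u ∧
      ((mkGraph F).Reachable (Sum.inr v) z ∨
        (∃ x ∈ X, RV F v x) ∧ ∃ x ∈ X, (mkGraph F).Reachable (Sum.inr x) z))) ?_ hr ?_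
  · intro a b hab
    rw [Finset.mem_union, mem_starU] at hab
    by_cases hau : a = u
    · subst hau
      have hb : b ∈ X := by
        rcases hab with h | h
        · exact absurd h (h0 b)
        · exact h.2
      constructor
      · rintro (⟨-, h⟩ | ⟨h, -⟩)
        · exact Or.inr ⟨by simp, Or.inr ⟨h, b, hb, SimpleGraph.Reachable.refl _⟩⟩
        · exact absurd rfl h
      · rintro (⟨h, -⟩ | ⟨-, h | h⟩)
        · simp at h
        · exact Or.inl ⟨rfl, b, hb, h⟩
        · exact Or.inl ⟨rfl, h.1⟩
    · have hF : (a, b) ∈ F := by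
        rcases hab with h | h
        · exact h
        · exact absurd h.1 hau
      have e := reach_edge hF
      constructor
      · rintro (⟨h, -⟩ | ⟨-, h | ⟨h, x, hx, h'⟩⟩)
        · simp [hau] at h
        · exact Or.inr ⟨by simp, Or.inl (h.trans e)⟩
        · exact Or.inr ⟨by simp, Or.inr ⟨h, x, hx, h'.trans e⟩⟩
      · rintro (⟨h, -⟩ | ⟨-, h | ⟨h, x, hx, h'⟩⟩)
        · simp at h
        · exact Or.inr ⟨by simpa using hau, Or.inl (h.trans e.symm)⟩
        · exact Or.inr ⟨by simpa using hau, Or.inr ⟨h, x, hx, h'.trans e.symm⟩⟩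
  · exact Or.inr ⟨by simp, Or.inl (SimpleGraph.Reachable.refl _)⟩

lemma star_RUu {F : Finset (U × V)} {u : U} {X : Finset V} (h0 : ∀ v, (u, v) ∉ F) {v : V} :
    RU (F ∪ starU u X) v u ↔ ∃ x ∈ X, RV F v x := by
  constructor
  · intro h
    rcases star_reach X h0 h with h | h
    · exact h.2
    · exact absurd rfl h.1
  · rintro ⟨x, hx, h⟩
    refine RV.transU (h.mono Finset.subset_union_left) (RU.edge ?_)
    simp [mem_starU, hx]

lemma star_RU {F : Finset (U × V)} {u : U} {X : Finset V} (h0 : ∀ v, (u, v) ∉ F) {v : V} {w : U}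
    (hw : w ≠ u) :
    RU (F ∪ starU u X) v w ↔ RU F v w ∨ (∃ x ∈ X, RV F v x) ∧ ∃ x ∈ X, RU F x w := by
  constructor
  · intro h
    rcases star_reach X h0 h with h | h
    · simp [hw] at h
    · exact h.2
  · rintro (h | ⟨h, x, hx, h'⟩)
    · exact h.mono Finset.subset_union_left
    · have h1 := (star_RUu (X := X) h0).2 h
      have h2 : RU (F ∪ starU u X) x u := RU.edge (by simp [mem_starU, hx])
      exact (h1.link h2).transU (h'.mono Finset.subset_union_left)

lemma star_RV {F : Finset (U × V)} {u : U} {X : Finset V} (h0 : ∀ v, (u, v) ∉ F) {v : V} {w : V} :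
    RV (F ∪ starU u X) v w ↔ RV F v w ∨ (∃ x ∈ X, RV F v x) ∧ ∃ x ∈ X, RV F x w := by
  constructor
  · intro h
    rcases star_reach X h0 h with h | h
    · simp at h
    · exact h.2
  · rintro (h | ⟨h, x, hx, h'⟩)
    · exact h.mono Finset.subset_union_left
    · have h1 := (star_RUu (X := X) h0).2 h
      have h2 : RU (F ∪ starU u X) x u := RU.edge (by simp [mem_starU, hx])
      exact (h1.link h2).trans (h'.mono Finset.subset_union_left)

/-- pairwise distinct components. -/
def PW (F : Finset (U × V)) (X : Finset V) : Prop :=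
  ∀ x ∈ X, ∀ y ∈ X, RV F x y → x = y

lemma star_acyclic {F : Finset (U × V)} {u : U} (X : Finset V) (h0 : ∀ v, (u, v) ∉ F)
    (hF : (mkGraph F).IsAcyclic) (hX : PW F X) : (mkGraph (F ∪ starU u X)).IsAcyclic := by
  induction X using Finset.induction_on with
  | empty => simpa [starU] using hF
  | insert a X ha ih =>
    have ih' := ih (fun x hx y hy => hX x (by simp [hx]) y (by simp [hy]))
    have hn : ¬ (mkGraph (F ∪ starU u X)).Reachable (Sum.inr a) (Sum.inl u) := by
      intro h
      obtain ⟨x, hx, h'⟩ := (star_RUu h0).1 h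
      exact ha (hX a (by simp) x (by simp [hx]) h' ▸ hx)
    have := (SimpleGraph.isAcyclic_add_edge_iff_of_not_reachable _ _ hn).2 ih'
    refine this.anti ?_
    intro y z hyz
    rw [SimpleGraph.sup_adj, SimpleGraph.edge_adj]
    simp only [mkGraph, SimpleGraph.fromRel_adj] at hyz ⊢
    rcases hyz with ⟨hne, ⟨⟨p, q⟩, hp, rfl, rfl⟩ | ⟨⟨p, q⟩, hp, rfl, rfl⟩⟩ <;>
    · simp only [Finset.mem_union, mem_starU, Finset.mem_insert] at hp
      simp [mem_starU]
      tauto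

lemma acyclic_pw {F : Finset (U × V)} (hF : (mkGraph F).IsAcyclic) (u : U) :
    PW (delU F u) (nbU F u) := by
  intro x hx y hy h
  by_contra hne
  rw [mem_nbU] at hx hy
  have hb := SimpleGraph.isAcyclic_iff_forall_adj_isBridge.1 hF ((adj_lr F u x).2 hx)
  rw [SimpleGraph.isBridge_iff] at hb
  apply hb
  have hle : mkGraph (F.erase (u, x)) ≤ (mkGraph F).deleteEdges {s(Sum.inl u, Sum.inr x)} := by
    intro a b hab
    rw [SimpleGraph.deleteEdges_adj]
    refine ⟨mkGraph_mono (Finset.erase_subset _ _) hab, ?_⟩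
    simp only [mkGraph, SimpleGraph.fromRel_adj] at hab
    rcases hab with ⟨-, ⟨⟨p, q⟩, hp, rfl, rfl⟩ | ⟨⟨p, q⟩, hp, rfl, rfl⟩⟩ <;>
    · simp at hp ⊢
      tauto
  refine SimpleGraph.Reachable.mono hle ?_
  have h1 : delU F u ⊆ F.erase (u, x) := by
    rintro ⟨a, b⟩ hp
    rw [mem_delU] at hp
    simp only [Finset.mem_erase, ne_eq, Prod.mk.injEq]
    exact ⟨fun h => hp.2 h.1, hp.1⟩
  have h2 : (u, y) ∈ F.erase (u, x) := by
    simp [hy, Ne.symm hne]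
  exact (reach_edge h2).trans (RV.mono h1 h).symm

lemma delU_none (F : Finset (U × V)) (u : U) : ∀ v, (u, v) ∉ delU F u := by
  intro v h
  exact (mem_delU.1 h).2 rfl

/-- avoiding a vertex. -/
lemma reach_avoid {F : Finset (U × V)} {u : U} {v : V} {z : U ⊕ V} (hn : ¬ RU F v u)
    (h : (mkGraph F).Reachable (Sum.inr v) z) :
    (mkGraph (delU F u)).Reachable (Sum.inr v) z := by
  have h' : (mkGraph (delU F u ∪ starU u (nbU F u))).Reachable (Sum.inr v) z := by
    rwa [del_union_star]
  rcases star_reach _ (delU_none F u) h' with h1 | h1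
  · rw [h1.1] at h
    exact absurd h hn
  · rcases h1.2 with h2 | h2
    · exact h2
    · exact absurd ((star_RUu (delU_none F u)).2 h2.1) (by rwa [del_union_star])

section fin
set_option linter.unusedSectionVars false
variable [Fintype U] [Fintype V]

/-- left vertices of the component of `v`. -/
def UK (F : Finset (U × V)) (v : V) : Finset U := Finset.univ.filter fun u => RU F v u
/-- right vertices of the component of `v`. -/
def VK (F : Finset (U × V)) (v : V) : Finset V := Finset.univ.filter fun w => RV F v w

lemma mem_UK {F : Finset (U × V)} {v : V} {u : U} : u ∈ UK F v ↔ RU F v u := by simp [UK]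
lemma mem_VK {F : Finset (U × V)} {v : V} {u : V} : u ∈ VK F v ↔ RV F v u := by simp [VK]

lemma UK_mono {F F' : Finset (U × V)} (hF : F ⊆ F') (v : V) : UK F v ⊆ UK F' v := by
  intro u hu
  rw [mem_UK] at *
  exact hu.mono hF

lemma not_RU_iso {F : Finset (U × V)} {u : U} (h0 : ∀ v, (u, v) ∉ F) (v : V) : ¬ RU F v u := by
  intro h
  have : RU (F ∪ starU u ∅) v u := h.mono Finset.subset_union_left
  rw [star_RUu h0] at this
  simp at this

lemma UK_congr {F : Finset (U × V)} {v w : V} (h : RV F v w) : UK F v = UK F w := by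
  ext u
  rw [mem_UK, mem_UK]
  exact ⟨fun h' => h.symm.transU h', fun h' => h.transU h'⟩

lemma star_UK_touch {F : Finset (U × V)} {u : U} {X : Finset V} (h0 : ∀ v, (u, v) ∉ F) {v : V}
    (ht : ∃ x ∈ X, RV F v x) : UK (F ∪ starU u X) v = insert u (X.biUnion (UK F)) := by
  ext w
  rw [mem_UK, Finset.mem_insert, Finset.mem_biUnion]
  by_cases hw : w = u
  · subst hw
    simp [star_RUu h0, ht]
  · rw [star_RU h0 hw]
    simp only [hw, false_or, mem_UK]
    constructor
    · rintro (h | h)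
      · obtain ⟨x, hx, hv⟩ := ht
        exact ⟨x, hx, hv.symm.transU h⟩
      · exact h.2
    · intro h
      exact Or.inr ⟨ht, h⟩

lemma star_card_touch {F : Finset (U × V)} {u : U} {X : Finset V} (h0 : ∀ v, (u, v) ∉ F) {v : V}
    (hX : PW F X) (ht : ∃ x ∈ X, RV F v x) :
    (UK (F ∪ starU u X) v).card = 1 + ∑ x ∈ X, (UK F x).card := by
  rw [star_UK_touch h0 ht, Finset.card_insert_of_notMem, Finset.card_biUnion, add_comm]
  · intro x hx y hy hne
    refine Finset.disjoint_left.2 ?_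
    intro a ha hb
    rw [mem_UK] at ha hb
    exact hne (hX x hx y hy (ha.link hb))
  · intro h
    rw [Finset.mem_biUnion] at h
    obtain ⟨x, -, h⟩ := h
    exact not_RU_iso h0 x (mem_UK.1 h)

lemma star_UK_not {F : Finset (U × V)} {u : U} {X : Finset V} (h0 : ∀ v, (u, v) ∉ F) {v : V}
    (ht : ¬ ∃ x ∈ X, RV F v x) : UK (F ∪ starU u X) v = UK F v := by
  ext w
  rw [mem_UK, mem_UK]
  by_cases hw : w = u
  · subst hw
    rw [star_RUu h0]
    exact ⟨fun h => absurd h ht, fun h => absurd h (not_RU_iso h0 v)⟩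
  · rw [star_RU h0 hw]
    exact ⟨fun h => h.elim id (fun h => absurd h.1 ht), Or.inl⟩

lemma star_VK_touch {F : Finset (U × V)} {u : U} {X : Finset V} (h0 : ∀ v, (u, v) ∉ F) {v : V}
    (ht : ∃ x ∈ X, RV F v x) : VK (F ∪ starU u X) v = X.biUnion (VK F) := by
  ext w
  rw [mem_VK, Finset.mem_biUnion, star_RV h0]
  simp only [mem_VK]
  constructor
  · rintro (h | h)
    · obtain ⟨x, hx, hv⟩ := ht
      exact ⟨x, hx, hv.symm.trans h⟩
    · exact h.2
  · intro h
    exact Or.inr ⟨ht, h⟩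

lemma star_VK_card {F : Finset (U × V)} {u : U} {X : Finset V} (h0 : ∀ v, (u, v) ∉ F) {v : V}
    (hX : PW F X) (ht : ∃ x ∈ X, RV F v x) :
    (VK (F ∪ starU u X) v).card = ∑ x ∈ X, (VK F x).card := by
  rw [star_VK_touch h0 ht, Finset.card_biUnion]
  intro x hx y hy hne
  refine Finset.disjoint_left.2 ?_
  intro a ha hb
  rw [mem_VK] at ha hb
  exact hne (hX x hx y hy (ha.trans hb.symm))

lemma star_VK_not {F : Finset (U × V)} {u : U} {X : Finset V} (h0 : ∀ v, (u, v) ∉ F) {v : V}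
    (ht : ¬ ∃ x ∈ X, RV F v x) : VK (F ∪ starU u X) v = VK F v := by
  ext w
  rw [mem_VK, mem_VK, star_RV h0]
  exact ⟨fun h => h.elim id (fun h => absurd h.1 ht), Or.inl⟩

/-- forests with degree `h` exactly on `A`. -/
structure IsFor (h : ℕ) (A : Finset U) (F : Finset (U × V)) : Prop where
  acyc : (mkGraph F).IsAcyclic
  deg : ∀ u ∈ A, (nbU F u).card = h
  deg0 : ∀ u ∉ A, ∀ v, (u, v) ∉ F

lemma nbU_star_self {F : Finset (U × V)} {u : U} {X : Finset V} (h0 : ∀ v, (u, v) ∉ F) :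
    nbU (F ∪ starU u X) u = X := by
  ext x
  simp [mem_nbU, mem_starU, h0]

lemma nbU_star_ne {F : Finset (U × V)} {u w : U} {X : Finset V} (hw : w ≠ u) :
    nbU (F ∪ starU u X) w = nbU F w := by
  ext x
  simp [mem_nbU, mem_starU, hw]

lemma nbU_del_ne {F : Finset (U × V)} {u w : U} (hw : w ≠ u) :
    nbU (delU F u) w = nbU F w := by
  ext x
  simp [mem_nbU, mem_delU, hw]

lemma IsFor.del {h : ℕ} {A : Finset U} {F : Finset (U × V)} (hF : IsFor h A F) (u : U) :
    IsFor h (A.erase u) (delU F u) where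
  acyc := hF.acyc.anti (mkGraph_mono (delU_sub F u))
  deg w hw := by
    rw [Finset.mem_erase] at hw
    rw [nbU_del_ne hw.1]
    exact hF.deg w hw.2
  deg0 w hw v hv := by
    rw [mem_delU] at hv
    exact hF.deg0 w (fun h' => hw (Finset.mem_erase.2 ⟨hv.2, h'⟩)) v hv.1

lemma IsFor.card {h : ℕ} {A : Finset U} {F : Finset (U × V)} (hF : IsFor h A F) (v : V) :
    (VK F v).card + (UK F v).card = 1 + h * (UK F v).card := by
  induction A using Finset.induction_on generalizing F v with
  | empty =>
    have hFe : ∀ u v, (u, v) ∉ F := fun u v => hF.deg0 u (by simp) v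
    have hU : UK F v = ∅ := by
      ext u
      simp [mem_UK, not_RU_iso (hFe u) v]
    have hV : VK F v = {v} := by
      ext w
      rw [mem_VK, Finset.mem_singleton]
      constructor
      · intro hr
        have := reach_induct (F := F) (fun z => z = Sum.inr v)
          (fun a b hab => absurd hab (hFe a b)) hr rfl
        simpa using this
      · rintro rfl
        exact RV.rfl'
    simp [hU, hV]
  | insert u A hu ih =>
    have hd := hF.del u
    rw [Finset.erase_insert hu] at hd
    have ih' := fun v => ih hd v
    have h0 := delU_none F u
    have hpw := acyclic_pw hF.acyc u
    by_cases ht : ∃ x ∈ nbU F u, RV (delU F u) v x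
    · have h1 := star_card_touch h0 hpw ht
      have h2 := star_VK_card h0 hpw ht
      rw [del_union_star] at h1 h2
      have h3 : ∑ x ∈ nbU F u, (VK (delU F u) x).card + ∑ x ∈ nbU F u, (UK (delU F u) x).card
          = h + h * ∑ x ∈ nbU F u, (UK (delU F u) x).card := by
        rw [← Finset.sum_add_distrib, Finset.sum_congr rfl (fun x _ => ih' x),
          Finset.sum_add_distrib, Finset.mul_sum]
        simp [hF.deg u (by simp)]
      rw [h1, h2]
      linarith
    · have h1 := star_UK_not h0 ht
      have h2 := star_VK_not h0 ht
      rw [del_union_star] at h1 h2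
      rw [h1, h2]
      exact ih' v

/-- valid partial matchings on `A`. -/
structure IsVal (E : Finset (U × V)) (h k : ℕ) (A : Finset U) (F : Finset (U × V)) : Prop
    extends IsFor h A F where
  sub : F ⊆ E
  size : ∀ v, (UK F v).card ≤ k

lemma IsVal.restar {E : Finset (U × V)} {h k : ℕ} {A : Finset U} {F : Finset (U × V)}
    (hF : IsVal E h k A F) (u : U) (X : Finset V) (hX : PW (delU F u) X) (hc : X.card = h)
    (hE : ∀ x ∈ X, (u, x) ∈ E) (hs : 1 + ∑ x ∈ X, (UK (delU F u) x).card ≤ k) :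
    IsVal E h k (insert u A) (delU F u ∪ starU u X) where
  acyc := star_acyclic X (delU_none F u) (hF.toIsFor.del u).acyc hX
  deg w hw := by
    by_cases hwu : w = u
    · subst hwu
      rw [nbU_star_self (delU_none F w), hc]
    · rw [nbU_star_ne hwu, nbU_del_ne hwu]
      exact hF.deg w (by simpa [hwu] using hw)
  deg0 w hw v := by
    simp only [Finset.mem_insert, not_or] at hw
    have := hF.deg0 w hw.2 v
    simp [mem_starU, mem_delU, hw.1, this]
  sub := by
    intro p hp
    rw [Finset.mem_union, mem_starU] at hp
    rcases hp with hp | hp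
    · exact hF.sub (delU_sub F u hp)
    · obtain ⟨a, b⟩ := p
      obtain ⟨rfl, hb⟩ := hp
      exact hE b hb
  size v := by
    by_cases ht : ∃ x ∈ X, RV (delU F u) v x
    · rw [star_card_touch (delU_none F u) hX ht]
      exact hs
    · rw [star_UK_not (delU_none F u) ht]
      exact (Finset.card_le_card (UK_mono (delU_sub F u) v)).trans (hF.size v)

/-- same components at all members of `L`. -/
def Agree (L : List V) (F F' : Finset (U × V)) : Prop :=
  ∀ w ∈ L, (∀ y, RV F' w y ↔ RV F w y) ∧ (∀ u, RU F' w u ↔ RU F w u)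

/-- the component of `v` is as small as possible, given those of `L`. -/
def MinAt (E : Finset (U × V)) (h k : ℕ) (A : Finset U) (F : Finset (U × V)) (L : List V)
    (v : V) : Prop :=
  ∀ F', IsVal E h k A F' → Agree L F F' → (UK F v).card ≤ (UK F' v).card

lemma swap_agree {F : Finset (U × V)} {u : U} {X : Finset V} {L : List V}
    (h1 : ∀ y ∈ L, ¬ RU F y u) (h2 : ∀ y ∈ L, ∀ x ∈ X, ¬ RV F y x) :
    Agree L F (delU F u ∪ starU u X) := by
  intro y hy
  have h0 := delU_none F u
  have hn : ¬ ∃ x ∈ X, RV (delU F u) y x := by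
    rintro ⟨x, hx, h⟩
    exact h2 y hy x hx (h.mono (delU_sub F u))
  have a1 : ∀ z, RV F y z ↔ RV (delU F u) y z := fun z =>
    ⟨fun h => reach_avoid (h1 y hy) h, fun h => h.mono (delU_sub F u)⟩
  have a2 : ∀ z, RU F y z ↔ RU (delU F u) y z := fun z =>
    ⟨fun h => reach_avoid (h1 y hy) h, fun h => h.mono (delU_sub F u)⟩
  constructor
  · intro z
    rw [a1, ← mem_VK, ← mem_VK, star_VK_not h0 hn]
  · intro z
    rw [a2, ← mem_UK, ← mem_UK, star_UK_not h0 hn]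

lemma key_move {E : Finset (U × V)} {h k : ℕ} {A : Finset U} {F : Finset (U × V)}
    (hF : IsVal E h k A F) {u : U} (hu : u ∈ A) {v w : V} {L : List V}
    (hvu : RU F v u) (hE : (u, w) ∈ E) (hvw : ¬ RV F v w)
    (hL : ∀ y ∈ L, ¬ RV F y v ∧ ¬ RV F y w) (hmin : MinAt E h k A F L v) :
    (k + 1 + (UK (delU F u) v).card ≤ (UK F v).card + (UK F w).card) ∧
    (∀ x ∈ nbU F u, ¬ RV (delU F u) v x → (UK (delU F u) x).card ≤ (UK F w).card) := by
  have h0 := delU_none F u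
  have hpw := acyclic_pw hF.acyc u
  have ht : ∃ x ∈ nbU F u, RV (delU F u) v x := by
    rw [← star_RUu h0, del_union_star]; exact hvu
  have hwu : ¬ RU F w u := fun h' => hvw (hvu.link h')
  have hwX : w ∉ nbU F u := fun h' => hwu (RU.edge (mem_nbU.1 h'))
  have hwt : ∀ x ∈ nbU F u, ¬ RV (delU F u) w x := by
    intro x hx h'
    exact hwu ((h'.mono (delU_sub F u)).transU (RU.edge (mem_nbU.1 hx)))
  have hUw : UK (delU F u) w = UK F w := by
    ext z
    rw [mem_UK, mem_UK]
    exact ⟨fun h => h.mono (delU_sub F u), fun h => reach_avoid hwu h⟩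
  have hn : (UK F v).card = 1 + ∑ x ∈ nbU F u, (UK (delU F u) x).card := by
    rw [← star_card_touch h0 hpw ht, del_union_star]
  have hAu : insert u A = A := Finset.insert_eq_of_mem hu
  -- the swapped configuration
  have hswap : ∀ x ∈ nbU F u,
      PW (delU F u) (insert w ((nbU F u).erase x)) ∧
      (∑ z ∈ insert w ((nbU F u).erase x), (UK (delU F u) z).card) + (UK (delU F u) x).card
        = (∑ z ∈ nbU F u, (UK (delU F u) z).card) + (UK F w).card ∧
      (1 + ∑ z ∈ insert w ((nbU F u).erase x), (UK (delU F u) z).card ≤ k →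
        (UK F v).card ≤ (UK (delU F u ∪ starU u (insert w ((nbU F u).erase x))) v).card) := by
    intro x hx
    have hwe : w ∉ (nbU F u).erase x := fun h' => hwX (Finset.mem_of_mem_erase h')
    have hP : PW (delU F u) (insert w ((nbU F u).erase x)) := by
      intro a ha b hb hab
      rw [Finset.mem_insert] at ha hb
      rcases ha with rfl | ha <;> rcases hb with rfl | hb
      · rfl
      · exact absurd hab (hwt b (Finset.mem_of_mem_erase hb))
      · exact absurd hab.symm (hwt a (Finset.mem_of_mem_erase ha))
      · exact hpw a (Finset.mem_of_mem_erase ha) b (Finset.mem_of_mem_erase hb) hab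
    refine ⟨hP, ?_, ?_⟩
    · rw [Finset.sum_insert hwe, hUw]
      have := Finset.sum_erase_add (nbU F u) (fun z => (UK (delU F u) z).card) hx
      omega
    · intro hk
      have hval := hF.restar u _ hP (by
        rw [Finset.card_insert_of_notMem hwe, Finset.card_erase_of_mem hx, hF.deg u hu]
        have : 0 < (nbU F u).card := Finset.card_pos.2 ⟨x, hx⟩
        rw [hF.deg u hu] at this
        omega) (by
        intro z hz
        rw [Finset.mem_insert] at hz
        rcases hz with rfl | hz
        · exact hE
        · exact hF.sub (mem_nbU.1 (Finset.mem_of_mem_erase hz))) hk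
      rw [hAu] at hval
      refine hmin _ hval (swap_agree ?_ ?_)
      · intro y hy h'
        exact (hL y hy).1 (h'.link hvu)
      · intro y hy z hz h'
        rw [Finset.mem_insert] at hz
        rcases hz with rfl | hz
        · exact (hL y hy).2 h'
        · exact (hL y hy).1 (h'.trans
            (RU.link (RU.edge (mem_nbU.1 (Finset.mem_of_mem_erase hz))) hvu))
  obtain ⟨xj, hxj, hvj⟩ := ht
  constructor
  · obtain ⟨hP, hsum, hm⟩ := hswap xj hxj
    have hnot : ¬ ∃ x ∈ insert w ((nbU F u).erase xj), RV (delU F u) v x := by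
      rintro ⟨x, hx, h'⟩
      rw [Finset.mem_insert] at hx
      rcases hx with rfl | hx
      · exact hvw (h'.mono (delU_sub F u))
      · rw [Finset.mem_erase] at hx
        exact hx.1 (hpw x hx.2 xj hxj (h'.symm.trans hvj))
    rw [star_UK_not h0 hnot] at hm
    have hc := congrArg Finset.card (UK_congr hvj)
    have : (UK (delU F u) xj).card ≤ ∑ x ∈ nbU F u, (UK (delU F u) x).card :=
      Finset.single_le_sum (f := fun x => (UK (delU F u) x).card) (fun _ _ => Nat.zero_le _) hxj
    by_contra hcon
    have := hm (by omega)
    omega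
  · intro x hx hvx
    obtain ⟨hP, hsum, hm⟩ := hswap x hx
    have hne : xj ≠ x := by rintro rfl; exact hvx hvj
    have ht' : ∃ z ∈ insert w ((nbU F u).erase x), RV (delU F u) v z :=
      ⟨xj, by simp [hne, hxj], hvj⟩
    rw [star_card_touch h0 hP ht'] at hm
    have hk := hF.size v
    by_contra hcon
    have := hm (by omega)
    omega

lemma key_h {E : Finset (U × V)} {h k : ℕ} {A : Finset U} {F : Finset (U × V)}
    (hF : IsVal E h k A F) {u : U} (hu : u ∈ A) {v : V} (hvu : RU F v u) {s : ℕ}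
    (h1 : k + 1 + (UK (delU F u) v).card ≤ (UK F v).card + s)
    (h2 : ∀ x ∈ nbU F u, ¬ RV (delU F u) v x → (UK (delU F u) x).card ≤ s) :
    k ≤ h * s := by
  have h0 := delU_none F u
  have hpw := acyclic_pw hF.acyc u
  have ht : ∃ x ∈ nbU F u, RV (delU F u) v x := by
    rw [← star_RUu h0, del_union_star]; exact hvu
  have hn : (UK F v).card = 1 + ∑ x ∈ nbU F u, (UK (delU F u) x).card := by
    rw [← star_card_touch h0 hpw ht, del_union_star]
  obtain ⟨xj, hxj, hvj⟩ := ht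
  have hc := congrArg Finset.card (UK_congr hvj)
  have := Finset.sum_erase_add (nbU F u) (fun z => (UK (delU F u) z).card) hxj
  have hb : ∑ x ∈ (nbU F u).erase xj, (UK (delU F u) x).card ≤ ((nbU F u).erase xj).card * s := by
    rw [← smul_eq_mul]
    apply Finset.sum_le_card_nsmul
    intro x hx
    rw [Finset.mem_erase] at hx
    exact h2 x hx.2 (fun h' => hx.1 (hpw x hx.2 xj hxj (h'.symm.trans hvj)))
  have hcard : ((nbU F u).erase xj).card + 1 = h := by
    rw [Finset.card_erase_add_one hxj, hF.deg u hu]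
  rw [← hcard, add_mul]
  omega

/-- uniqueness of the splitting vertex -/
lemma key_unique {E : Finset (U × V)} {h k : ℕ} {A : Finset U} {F : Finset (U × V)}
    (hF : IsVal E h k A F) {u u' : U} {v : V}
    (hvu : RU F v u) (hvu' : RU F v u') {s s' : ℕ}
    (h1 : k + 1 + (UK (delU F u) v).card ≤ (UK F v).card + s)
    (h2 : ∀ x ∈ nbU F u, ¬ RV (delU F u) v x → (UK (delU F u) x).card ≤ s)
    (h1' : k + 1 + (UK (delU F u') v).card ≤ (UK F v).card + s')
    (h2' : ∀ x ∈ nbU F u', ¬ RV (delU F u') v x → (UK (delU F u') x).card ≤ s')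
    (hs : 2 * s < k + 1) (hs' : 2 * s' < k + 1) : u = u' := by
  by_contra hne
  -- general facts
  have sub : ∀ a, UK (delU F a) v ⊆ UK F v := fun a => UK_mono (delU_sub F a) v
  have cardA : ∀ a, (UK F v \ UK (delU F a) v).card + (UK (delU F a) v).card = (UK F v).card :=
    fun a => Finset.card_sdiff_add_card_eq_card (sub a)
  have tch : ∀ a z, z ≠ a → RU F v a → RU F v z → ∃ x ∈ nbU F a, RU (delU F a) x z := by
    intro a z hza hva hvz
    have h0 := delU_none F a
    have hvz' := hvz
    have hva' := hva
    rw [← del_union_star F a, star_RU h0 hza] at hvz'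
    rw [← del_union_star F a, star_RUu h0] at hva'
    rcases hvz' with h | h
    · obtain ⟨x, hx, hvx⟩ := hva'
      exact ⟨x, hx, hvx.symm.transU h⟩
    · exact h.2
  -- reach from `a` inside a branch avoiding `b`
  have star : ∀ a b x z, a ≠ b → x ∈ nbU F a → ¬ RU (delU F a) x b →
      (mkGraph (delU F a)).Reachable (Sum.inr x) z →
      (mkGraph (delU F b)).Reachable (Sum.inl a) z := by
    intro a b x z hab hx hnb hr
    have e1 : (mkGraph (delU F b)).Reachable (Sum.inl a) (Sum.inr x) :=
      reach_edge (mem_delU.2 ⟨mem_nbU.1 hx, hab⟩)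
    refine e1.trans (reach_mono ?_ (reach_avoid hnb hr))
    intro p hp
    rw [mem_delU, mem_delU] at hp
    exact mem_delU.2 ⟨hp.1.1, hp.2⟩
  -- nested case
  have nested : ∀ a b (s : ℕ), a ≠ b → RU F v a → RU F v b → 
      (∀ x ∈ nbU F a, ¬ RV (delU F a) v x → (UK (delU F a) x).card ≤ s) →
      ¬ RU (delU F a) v b → (UK F v \ UK (delU F b) v).card ≤ s := by
    intro a b s hab hva hvb hb2 hnb
    obtain ⟨x, hx, hxb⟩ := tch a b hab.symm hva hvb
    have hvx : ¬ RV (delU F a) v x := fun h' => hnb (h'.transU hxb)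
    refine le_trans (Finset.card_le_card ?_) (hb2 x hx hvx)
    have hva' := hva
    rw [← del_union_star F a, star_RUu (delU_none F a)] at hva'
    obtain ⟨xj, hxj, hvj⟩ := hva'
    have hjb : ¬ RU (delU F a) xj b := fun h' => hnb (hvj.transU h')
    have hva2 : RU (delU F b) v a := (star a b xj _ hab hxj hjb hvj.symm).symm
    intro z hz
    rw [Finset.mem_sdiff, mem_UK, mem_UK] at hz
    rw [mem_UK]
    by_cases hza : z = a
    · subst hza
      exact absurd hva2 hz.2
    · obtain ⟨y, hy, hyz⟩ := tch a z hza hva hz.1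
      by_cases hyb : RU (delU F a) y b
      · have : RV (delU F a) x y := hxb.link hyb
        exact this.transU hyz
      · exact absurd (hva2.trans (star a b y _ hab hy hyb hyz)) hz.2
  have c1 := cardA u
  have c2 := cardA u'
  by_cases n1 : RU (delU F u) v u'
  · by_cases n2 : RU (delU F u') v u
    · -- disjoint
      have hd : Disjoint (UK F v \ UK (delU F u) v) (UK F v \ UK (delU F u') v) := by
        rw [Finset.disjoint_left]
        intro z hz hz'
        rw [Finset.mem_sdiff, mem_UK, mem_UK] at hz hz'
        have hzu : z ≠ u := by rintro rfl; exact hz'.2 n2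
        obtain ⟨y, hy, hyz⟩ := tch u z hzu hvu hz.1
        have hyb : ¬ RU (delU F u) y u' := by
          intro h'
          exact hz.2 ((n1.link h').transU hyz)
        exact hz'.2 (n2.trans (star u u' y _ hne hy hyb hyz))
      have hc := Finset.card_union_of_disjoint hd
      have hc2 : ((UK F v \ UK (delU F u) v) ∪ (UK F v \ UK (delU F u') v)).card ≤ (UK F v).card :=
        Finset.card_le_card (Finset.union_subset Finset.sdiff_subset Finset.sdiff_subset)
      have := hF.size v
      omega
    · have := nested u' u s' (Ne.symm hne) hvu' hvu h2' n2
      omega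
  · have := nested u u' s hne hvu hvu' h2 n1
    omega

/-- the list of explored components. -/
def Good (E : Finset (U × V)) (h k : ℕ) (A : Finset U) (u0 : U) (F : Finset (U × V)) :
    List V → Prop
  | [] => True
  | v :: L => Good E h k A u0 F L ∧ (∀ y ∈ L, ¬ RV F y v) ∧
      ((u0, v) ∈ E ∨ ∃ w ∈ L, ∃ u, RU F w u ∧ (u, v) ∈ E) ∧ MinAt E h k A F L v

lemma good_agree {E : Finset (U × V)} {h k : ℕ} {A : Finset U} {u0 : U} {F F' : Finset (U × V)}
    {L : List V} (ha : Agree L F F') (hg : Good E h k A u0 F L) : Good E h k A u0 F' L := by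
  induction L with
  | nil => trivial
  | cons v L ih =>
    obtain ⟨g1, g2, g3, g4⟩ := hg
    have ha' : Agree L F F' := fun w hw => ha w (List.mem_cons_of_mem _ hw)
    refine ⟨ih ha' g1, ?_, ?_, ?_⟩
    · intro y hy h'
      exact g2 y hy (((ha' y hy).1 v).1 h')
    · refine g3.imp id ?_
      rintro ⟨w, hw, u, hu, he⟩
      exact ⟨w, hw, u, ((ha' w hw).2 u).2 hu, he⟩
    · intro F'' hF'' hag
      have e1 : UK F' v = UK F v := by
        ext u
        rw [mem_UK, mem_UK]
        exact (ha v (by simp)).2 u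
      rw [e1]
      refine g4 F'' hF'' ?_
      intro w hw
      exact ⟨fun y => ((hag w hw).1 y).trans ((ha' w hw).1 y),
        fun y => ((hag w hw).2 y).trans ((ha' w hw).2 y)⟩

lemma good_extend {E : Finset (U × V)} {h k : ℕ} {A : Finset U} {u0 : U} {F : Finset (U × V)}
    {L : List V} (hF : IsVal E h k A F) (hg : Good E h k A u0 F L) {v : V}
    (hv : ∀ y ∈ L, ¬ RV F y v)
    (hd : (u0, v) ∈ E ∨ ∃ w ∈ L, ∃ u, RU F w u ∧ (u, v) ∈ E) :
    ∃ F', IsVal E h k A F' ∧ Good E h k A u0 F' (v :: L) := by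
  obtain ⟨F', hF', hmin⟩ := Finset.exists_min_image
    (Finset.univ.filter fun F' : Finset (U × V) => IsVal E h k A F' ∧ Agree L F F')
    (fun F' => (UK F' v).card) ⟨F, by
      simp only [Finset.mem_filter, Finset.mem_univ, true_and]
      exact ⟨hF, fun w _ => ⟨fun _ => Iff.rfl, fun _ => Iff.rfl⟩⟩⟩
  simp only [Finset.mem_filter, Finset.mem_univ, true_and] at hF' hmin
  obtain ⟨hval, hag⟩ := hF'
  refine ⟨F', hval, good_agree hag hg, ?_, ?_, ?_⟩
  · intro y hy h'
    exact hv y hy (((hag y hy).1 v).1 h')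
  · refine hd.imp id ?_
    rintro ⟨w, hw, u, hu, he⟩
    exact ⟨w, hw, u, ((hag w hw).2 u).2 hu, he⟩
  · intro F'' hF'' hag'
    refine hmin F'' ⟨hF'', ?_⟩
    intro w hw
    exact ⟨fun y => ((hag' w hw).1 y).trans ((hag w hw).1 y),
        fun y => ((hag' w hw).2 y).trans ((hag w hw).2 y)⟩

lemma good_pw {E : Finset (U × V)} {h k : ℕ} {A : Finset U} {u0 : U} {F : Finset (U × V)}
    {L : List V} (hg : Good E h k A u0 F L) : L.Nodup ∧ PW F L.toFinset := by
  induction L with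
  | nil => exact ⟨List.nodup_nil, by intro x hx; simp at hx⟩
  | cons v L ih =>
    obtain ⟨g1, g2, -, -⟩ := hg
    obtain ⟨i1, i2⟩ := ih g1
    refine ⟨List.nodup_cons.2 ⟨fun h' => g2 v h' RV.rfl', i1⟩, ?_⟩
    intro x hx y hy hxy
    simp only [List.toFinset_cons, Finset.mem_insert, List.mem_toFinset] at hx hy
    rcases hx with rfl | hx <;> rcases hy with rfl | hy
    · rfl
    · exact absurd hxy.symm (g2 y hy)
    · exact absurd hxy (g2 x hx)
    · exact i2 x (by simpa using hx) y (by simpa using hy) hxy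

lemma good_closed {E : Finset (U × V)} {h k : ℕ} {A : Finset U} (u0 : U) {F : Finset (U × V)}
    (hF : IsVal E h k A F) : ∃ F' L, IsVal E h k A F' ∧ Good E h k A u0 F' L ∧
      ∀ v, ((u0, v) ∈ E ∨ ∃ w ∈ L, ∃ u, RU F' w u ∧ (u, v) ∈ E) → ∃ y ∈ L, RV F' y v := by
  by_contra hcon
  push Not at hcon
  have key : ∀ n : ℕ, ∃ F' L, IsVal E h k A F' ∧ Good E h k A u0 F' L ∧ L.length = n := by
    intro n
    induction n with
    | zero => exact ⟨F, [], hF, trivial, rfl⟩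
    | succ n ih =>
      obtain ⟨F', L, h1, h2, h3⟩ := ih
      obtain ⟨v, hv, hv'⟩ := hcon F' L h1 h2
      obtain ⟨F'', h4, h5⟩ := good_extend h1 h2 hv' hv
      exact ⟨F'', v :: L, h4, h5, by simp [h3]⟩
  obtain ⟨F', L, -, h2, h3⟩ := key (Fintype.card V + 1)
  have := (good_pw h2).1.length_le_card
  omega

lemma good_min {E : Finset (U × V)} {h k : ℕ} {A : Finset U} {u0 : U} {F : Finset (U × V)}
    {L : List V} (hg : Good E h k A u0 F L) {w : V} (hw : w ∈ L) :
    ∃ L1 : List V, L1 ⊆ L ∧ MinAt E h k A F L1 w ∧ ∀ y ∈ L1, ¬ RV F y w := by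
  induction L with
  | nil => simp at hw
  | cons v L ih =>
    obtain ⟨g1, g2, -, g4⟩ := hg
    rcases List.mem_cons.1 hw with rfl | hw
    · exact ⟨L, List.subset_cons_self _ _, g4, g2⟩
    · obtain ⟨L1, a, b, c⟩ := ih g1 hw
      exact ⟨L1, fun x hx => List.mem_cons_of_mem _ (a hx), b, c⟩

lemma good_parent {E : Finset (U × V)} {h k : ℕ} {A : Finset U} {u0 : U} {F : Finset (U × V)}
    {L : List V} (hg : Good E h k A u0 F L) {v : V} (hv : v ∈ L) :
    (u0, v) ∈ E ∨ ∃ w ∈ L, ∃ u, ∃ L1, RU F w u ∧ (u, v) ∈ E ∧ ¬ RV F w v ∧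
      (∀ y ∈ L1, ¬ RV F y w ∧ ¬ RV F y v) ∧ MinAt E h k A F L1 w := by
  induction L with
  | nil => simp at hv
  | cons v0 L ih =>
    obtain ⟨g1, g2, g3, g4⟩ := hg
    rcases List.mem_cons.1 hv with rfl | hv
    · refine g3.imp id ?_
      rintro ⟨w, hw, u, hu, he⟩
      obtain ⟨L1, a, b, c⟩ := good_min g1 hw
      exact ⟨w, List.mem_cons_of_mem _ hw, u, L1, hu, he, g2 w hw,
        fun y hy => ⟨c y hy, g2 y (a hy)⟩, b⟩
    · refine (ih g1 hv).imp id ?_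
      rintro ⟨w, hw, rest⟩
      exact ⟨w, List.mem_cons_of_mem _ hw, rest⟩

end fin

lemma account {ι : Type*} (L Rt : Finset ι) (n : ι → ℕ) (p : ι → ι) (k h e m N : ℕ)
    (hRt : Rt ⊆ L) (hcard : Rt.card ≤ h + e)
    (hsum : ∀ T ⊆ Rt, T.card = h → k ≤ ∑ v ∈ T, n v)
    (hm2 : h * m < k + h) (hm3 : 1 ≤ m) (hm4 : 2 * m ≤ k + 1) (hN : N + m = k + 1 + e * m)
    (hp : ∀ v ∈ L \ Rt, (e + 1) * n v < N → p v ∈ L ∧ k + 1 ≤ n (p v) + n v ∧ m ≤ n v)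
    (hch : ∀ w ∈ L, ((L \ Rt).filter fun v => (e + 1) * n v < N ∧ p v = w).card ≤ e) :
    N * L.card + N < (e + 1) * (1 + ∑ v ∈ L, n v) + N * h := by
  set g : ι → ℤ := fun v => (e + 1) * n v - N with hg
  have hNz : (N : ℤ) + m = k + 1 + e * m := by exact_mod_cast hN
  have hm3z : (1 : ℤ) ≤ m := by exact_mod_cast hm3
  have hm4z : (2 : ℤ) * m ≤ k + 1 := by exact_mod_cast hm4
  set Sm := (L \ Rt).filter fun v => (e + 1) * n v < N with hSm
  set B := Sm.image p with hB
  have hsmall : ∀ v ∈ Sm, v ∈ L ∧ v ∉ Rt ∧ (e + 1) * n v < N ∧ p v ∈ L ∧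
      k + 1 ≤ n (p v) + n v ∧ m ≤ n v := by
    intro v hv
    rw [hSm, Finset.mem_filter] at hv
    have := hp v hv.1 hv.2
    rw [Finset.mem_sdiff] at hv
    exact ⟨hv.1.1, hv.1.2, hv.2, this⟩
  have hSmL : Sm ⊆ L := fun v hv => (hsmall v hv).1
  have hBL : B ⊆ L := by
    intro w hw
    obtain ⟨v, hv, rfl⟩ := Finset.mem_image.1 hw
    exact (hsmall v hv).2.2.2.1
  have h2N : 1 ≤ e → (2 : ℤ) * N ≤ (e + 1) * (k + 1) := by
    intro he
    have hez : (1 : ℤ) ≤ e := by exact_mod_cast he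
    nlinarith [mul_nonneg (sub_nonneg.2 hez) (sub_nonneg.2 hm4z)]
  have hepos : ∀ v ∈ Sm, 1 ≤ e := by
    intro v hv
    have hc := hch (p v) (hsmall v hv).2.2.2.1
    have : 0 < ((L \ Rt).filter fun v' => (e + 1) * n v' < N ∧ p v' = p v).card := by
      apply Finset.card_pos.2
      refine ⟨v, ?_⟩
      rw [hSm, Finset.mem_filter] at hv
      rw [Finset.mem_filter]
      exact ⟨hv.1, hv.2, rfl⟩
    omega
  have hBbig : ∀ w ∈ B, ¬ ((e + 1) * n w < N) := by
    intro w hw hlt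
    obtain ⟨v, hv, rfl⟩ := Finset.mem_image.1 hw
    obtain ⟨-, -, h3, -, h5, -⟩ := hsmall v hv
    have := h2N (hepos v hv)
    zify at h3 h5 hlt
    have hee : (0 : ℤ) ≤ e := by positivity
    nlinarith
  have hdisj : Disjoint Sm B := by
    rw [Finset.disjoint_left]
    intro v hv hv'
    exact hBbig v hv' (hsmall v hv).2.2.1
  -- clusters
  have hcl : 0 ≤ ∑ v ∈ Sm, g v + ∑ v ∈ B, g v := by
    have : ∑ v ∈ Sm, g v = ∑ w ∈ B, ∑ v ∈ Sm.filter (fun v => p v = w), g v :=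
      (Finset.sum_fiberwise_of_maps_to (fun v hv => Finset.mem_image_of_mem p hv) g).symm
    rw [this, ← Finset.sum_add_distrib]
    apply Finset.sum_nonneg
    intro w hw
    obtain ⟨v0, hv0, hpv0⟩ := Finset.mem_image.1 hw
    set Q := Sm.filter (fun v => p v = w) with hQ
    have hv0Q : v0 ∈ Q := by rw [hQ, Finset.mem_filter]; exact ⟨hv0, hpv0⟩
    have hQe : Q.card ≤ e := by
      refine le_trans (Finset.card_le_card ?_) (hch w (hBL hw))
      intro v hv
      rw [hQ, Finset.mem_filter, hSm, Finset.mem_filter] at hv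
      rw [Finset.mem_filter]
      exact ⟨hv.1.1, hv.1.2, hv.2⟩
    have hsumQ : (n v0 : ℤ) + (Q.card - 1) * m ≤ ∑ v ∈ Q, (n v : ℤ) := by
      rw [← Finset.add_sum_erase Q (fun v => (n v : ℤ)) hv0Q]
      have h1 : (Q.erase v0).card • (m : ℤ) ≤ ∑ v ∈ Q.erase v0, (n v : ℤ) := by
        apply Finset.card_nsmul_le_sum
        intro v hv
        have := Finset.mem_of_mem_erase hv
        rw [hQ, Finset.mem_filter] at this
        exact_mod_cast (hsmall v this.1).2.2.2.2.2
      have h2 : ((Q.erase v0).card : ℤ) = Q.card - 1 := by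
        have := Finset.card_erase_add_one hv0Q
        omega
      rw [nsmul_eq_mul, h2] at h1
      linarith
    have hgQ : ∑ v ∈ Q, g v = (e + 1) * ∑ v ∈ Q, (n v : ℤ) - Q.card * N := by
      simp [hg, Finset.sum_sub_distrib, Finset.mul_sum]
    rw [hgQ]
    have h5 := (hsmall v0 hv0).2.2.2.2.1
    rw [hpv0] at h5
    zify at h5 hQe
    have hee : (0 : ℤ) ≤ e := by positivity
    have hfin : ((e : ℤ) + 1) * (k + 1 + (Q.card - 1) * m) ≤
        (e + 1) * (∑ v ∈ Q, (n v : ℤ) + n w) :=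
      mul_le_mul_of_nonneg_left (by linarith) (by linarith)
    have hNe : (N : ℤ) = k + 1 + e * m - m := by linarith
    simp only [hg]
    have hprod := mul_nonneg (sub_nonneg.2 hQe) (sub_nonneg.2 hm4z)
    rw [hNe]
    nlinarith
  -- roots
  have hroot : 0 < ∑ v ∈ Rt \ B, g v + (e + 1) + N * (h - 1) := by
    set D := Rt \ B with hD
    have hgD : ∑ v ∈ D, g v = (e + 1) * ∑ v ∈ D, (n v : ℤ) - D.card * N := by
      simp [hg, Finset.sum_sub_distrib, Finset.mul_sum]
    have hDc : D.card ≤ h + e := (Finset.card_le_card Finset.sdiff_subset).trans hcard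
    have hee : (0 : ℤ) ≤ e := by positivity
    have hN0 : (0 : ℤ) ≤ N := by positivity
    rw [hgD]
    by_cases hDh : D.card < h
    · have h1 : (D.card : ℤ) ≤ h - 1 := by omega
      have h2 : (0 : ℤ) ≤ ∑ v ∈ D, (n v : ℤ) := by positivity
      nlinarith [mul_le_mul_of_nonneg_right h1 hN0, mul_nonneg hee h2]
    · push Not at hDh
      obtain ⟨T, hT, hTmin⟩ := Finset.exists_min_image (D.powersetCard h)
        (fun T => ∑ v ∈ T, n v) (Finset.powersetCard_nonempty.2 hDh)
      rw [Finset.mem_powersetCard] at hT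
      have hTk := hsum T (hT.1.trans Finset.sdiff_subset) hT.2
      have hout : ∀ y ∈ D \ T, m ≤ n y := by
        intro y hy
        rw [Finset.mem_sdiff] at hy
        by_contra hlt
        have hle : ∀ t ∈ T, n t ≤ m - 1 := by
          intro t ht
          have hyt : y ∉ T.erase t := fun h' => hy.2 (Finset.mem_of_mem_erase h')
          have := hTmin (insert y (T.erase t)) (by
            rw [Finset.mem_powersetCard]
            constructor
            · intro z hz
              rw [Finset.mem_insert] at hz
              rcases hz with rfl | hz
              · exact hy.1
              · exact hT.1 (Finset.mem_of_mem_erase hz)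
            · rw [Finset.card_insert_of_notMem hyt, Finset.card_erase_add_one ht, hT.2])
          rw [Finset.sum_insert hyt] at this
          have h3 := Finset.sum_erase_add T n ht
          omega
        have h4 := Finset.sum_le_card_nsmul T n (m - 1) hle
        rw [hT.2, smul_eq_mul] at h4
        have h6 : k ≤ T.sum n := hTk
        have h5 : h * m = h * (m - 1) + h := by
          obtain ⟨m', rfl⟩ : ∃ m', m = m' + 1 := ⟨m - 1, by omega⟩
          simp [mul_add]
        omega
      have hs1 : (k : ℤ) + (D.card - h) * m ≤ ∑ v ∈ D, (n v : ℤ) := by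
        rw [← Finset.sum_sdiff hT.1]
        have h1 : (D \ T).card • (m : ℤ) ≤ ∑ v ∈ D \ T, (n v : ℤ) := by
          apply Finset.card_nsmul_le_sum
          intro v hv
          exact_mod_cast hout v hv
        have h2 : ((D \ T).card : ℤ) = D.card - h := by
          have := Finset.card_sdiff_add_card_eq_card hT.1
          omega
        rw [nsmul_eq_mul, h2] at h1
        have h3 : (k : ℤ) ≤ ∑ v ∈ T, (n v : ℤ) := by exact_mod_cast hTk
        linarith
      obtain ⟨x, hx⟩ := Nat.exists_eq_add_of_le hDh
      have hxe : (x : ℤ) ≤ e := by omega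
      have hDz : (D.card : ℤ) = h + x := by exact_mod_cast hx
      rw [hDz] at hs1 ⊢
      have hNe : (N : ℤ) = k + 1 + e * m - m := by linarith
      have hfin : ((e : ℤ) + 1) * (k + (h + x - h) * m) ≤ (e + 1) * ∑ v ∈ D, (n v : ℤ) :=
        mul_le_mul_of_nonneg_left hs1 (by linarith)
      have hprod := mul_nonneg (sub_nonneg.2 hxe) (sub_nonneg.2 hm4z)
      have hpos : 0 < ((e : ℤ) + 1) * m := by positivity
      have : (e + 1) * ∑ v ∈ D, (n v : ℤ) - (h + x) * N + (e + 1) + N * (h - 1)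
        = (e + 1) * ∑ v ∈ D, (n v : ℤ) + (e + 1) - N * (x + 1) := by ring
      rw [this, hNe]
      nlinarith
  -- rest
  have hrest : 0 ≤ ∑ v ∈ L \ (Sm ∪ B ∪ (Rt \ B)), g v := by
    apply Finset.sum_nonneg
    intro v hv
    simp only [Finset.mem_sdiff, Finset.mem_union, not_or, not_and, not_not] at hv
    obtain ⟨hvL, ⟨hvS, hvB⟩, hvR⟩ := hv
    have hvR' : v ∉ Rt := fun h' => hvB (hvR h')
    have : ¬ ((e + 1) * n v < N) := by
      intro hlt
      apply hvS
      rw [hSm, Finset.mem_filter, Finset.mem_sdiff]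
      exact ⟨⟨hvL, hvR'⟩, hlt⟩
    zify at this
    simp only [hg]
    linarith
  have hd2 : Disjoint (Sm ∪ B) (Rt \ B) := by
    rw [Finset.disjoint_left]
    intro v hv hv'
    rw [Finset.mem_sdiff] at hv'
    rcases Finset.mem_union.1 hv with h' | h'
    · exact (hsmall v h').2.1 hv'.1
    · exact hv'.2 h'
  have hsub : Sm ∪ B ∪ (Rt \ B) ⊆ L :=
    Finset.union_subset (Finset.union_subset hSmL hBL) (Finset.sdiff_subset.trans hRt)
  have htot : ∑ v ∈ L, g v = (e + 1) * ∑ v ∈ L, (n v : ℤ) - L.card * N := by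
    simp [hg, Finset.sum_sub_distrib, Finset.mul_sum]
  rw [← Finset.sum_sdiff hsub, Finset.sum_union hd2, Finset.sum_union hdisj] at htot
  zify
  nlinarith

lemma degL_eq (F : Finset (U × V)) (u : U) : degL F u = (nbU F u).card := by
  unfold degL nbU
  rw [Finset.card_image_of_injOn]
  rintro ⟨a, b⟩ ha ⟨c, d⟩ hc hbd
  simp at ha hc hbd
  ext <;> simp [ha.2, hc.2, hbd]

lemma step [Fintype U] [Fintype V] {E : Finset (U × V)} {h k e m N : ℕ}
    (hk1 : 1 ≤ k) (hh : 2 ≤ h) (he : 1 ≤ e)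
    (hm2 : h * m < k + h) (hm1 : k ≤ h * m) (hNm : N + m = k + 1 + e * m)
    (hdeg : ∀ u, degL E u ≤ h + e)
    (hN : ∀ S : Finset U, N * h * S.card + (e + 1) * S.card ≤ N * (nbhd E S).card + N * S.card)
    {A : Finset U} {F0 : Finset (U × V)} {u0 : U} (hu0 : u0 ∉ A) (hF0 : IsVal E h k A F0) :
    ∃ F, IsVal E h k (insert u0 A) F := by
  by_contra hno
  obtain ⟨F, L, hF, hg, hcl⟩ := good_closed u0 hF0
  obtain ⟨-, hpw⟩ := good_pw hg
  have hm3 : 1 ≤ m := by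
    rcases Nat.eq_zero_or_pos m with rfl | h'
    · simp at hm1; omega
    · exact h'
  have hmin : ∀ s, k ≤ h * s → m ≤ s := by
    intro s hs
    by_contra hlt
    push Not at hlt
    have : h * (s + 1) ≤ h * m := Nat.mul_le_mul_left h hlt
    rw [mul_add] at this
    omega
  have hm4 : 2 * m ≤ k + 1 := by
    obtain ⟨m', rfl⟩ : ∃ m', m = m' + 1 := ⟨m - 1, by omega⟩
    have : 2 * m' ≤ h * m' := Nat.mul_le_mul_right m' hh
    rw [mul_add] at hm2
    omega
  have h2N : 2 * N ≤ (e + 1) * (k + 1) := by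
    obtain ⟨e', rfl⟩ : ∃ e', e = e' + 1 := ⟨e - 1, by omega⟩
    have h1 : N = k + 1 + e' * m := by
      have : (e' + 1) * m = e' * m + m := by ring
      omega
    rw [h1]
    nlinarith [Nat.mul_le_mul_left e' hm4]
  have hdel : delU F u0 = F := by
    ext p
    rw [mem_delU]
    refine ⟨fun h => h.1, fun h => ⟨h, ?_⟩⟩
    rintro rfl
    exact hF.deg0 _ hu0 p.2 h
  have hmemA : ∀ v u, RU F v u → u ∈ A := by
    intro v u h'
    by_contra hu
    exact not_RU_iso (hF.deg0 u hu) v h'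
  set LL := L.toFinset with hLL
  set Rt := LL.filter (fun v => (u0, v) ∈ E) with hRt
  have hRtc : Rt.card ≤ h + e := by
    refine le_trans (Finset.card_le_card ?_) ((degL_eq E u0).symm.le.trans (hdeg u0))
    intro v hv
    rw [hRt, Finset.mem_filter] at hv
    exact mem_nbU.2 hv.2
  have hpar : ∀ v, ∃ w u, v ∈ LL \ Rt → (w ∈ LL ∧ RU F w u ∧ (u, v) ∈ E ∧ ¬ RV F w v ∧
      (k + 1 + (UK (delU F u) w).card ≤ (UK F w).card + (UK F v).card) ∧
      (∀ x ∈ nbU F u, ¬ RV (delU F u) w x → (UK (delU F u) x).card ≤ (UK F v).card)) := by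
    intro v
    by_cases hv : v ∈ LL \ Rt
    · rw [Finset.mem_sdiff, hRt, Finset.mem_filter] at hv
      have hvL : v ∈ L := by simpa [hLL] using hv.1
      rcases good_parent hg hvL with h' | ⟨w, hw, u, L1, a1, a2, a3, a4, a5⟩
      · exact absurd ⟨hv.1, h'⟩ hv.2
      · obtain ⟨b1, b2⟩ := key_move hF (hmemA w u a1) a1 a2 a3 a4 a5
        exact ⟨w, u, fun _ => ⟨by simpa [hLL] using hw, a1, a2, a3, b1, b2⟩⟩
    · exact ⟨v, u0, fun h' => absurd h' hv⟩
  choose p q hpq using hpar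
  have hacc := account LL Rt (fun v => (UK F v).card) p k h e m N (Finset.filter_subset _ _) hRtc
    (by
      intro T hT hTc
      by_contra hlt
      apply hno
      refine ⟨_, hF.restar u0 T ?_ hTc ?_ ?_⟩
      · rw [hdel]
        intro x hx y hy hxy
        exact hpw x (Finset.filter_subset _ _ (hT hx)) y (Finset.filter_subset _ _ (hT hy)) hxy
      · intro x hx
        exact (Finset.mem_filter.1 (hT hx)).2
      · rw [hdel]; omega)
    hm2 hm3 hm4 hNm
    (by
      intro v hv hsm
      obtain ⟨a1, a2, a3, a4, a5, a6⟩ := hpq v hv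
      refine ⟨a1, by omega, ?_⟩
      exact hmin _ (key_h hF (hmemA _ _ a2) a2 a5 a6))
    (by
      intro w hw
      set Q := (LL \ Rt).filter fun v => (e + 1) * (UK F v).card < N ∧ p v = w with hQ
      rcases Q.eq_empty_or_nonempty with hemp | ⟨v1, hv1⟩
      · rw [hemp]; simp
      · have hQm : ∀ v ∈ Q, v ∈ LL \ Rt ∧ 2 * (UK F v).card < k + 1 ∧ p v = w := by
          intro v hv
          rw [hQ, Finset.mem_filter] at hv
          refine ⟨hv.1, ?_, hv.2.2⟩
          by_contra hge
          push Not at hge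
          have := Nat.mul_le_mul_left (e + 1) hge
          nlinarith [hv.2.1]
        have hsub : Q ⊆ nbU E (q v1) \ nbU F (q v1) := by
          intro v hv
          obtain ⟨c1, c2, c3⟩ := hQm v hv
          obtain ⟨d1, d2, d3⟩ := hQm v1 hv1
          obtain ⟨a1, a2, a3, a4, a5, a6⟩ := hpq v c1
          obtain ⟨b1, b2, b3, b4, b5, b6⟩ := hpq v1 d1
          rw [c3] at a1 a2 a4 a5 a6
          rw [d3] at b1 b2 b4 b5 b6
          have hqq : q v = q v1 := key_unique hF a2 b2 a5 a6 b5 b6 c2 d2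
          rw [hqq] at a3
          rw [Finset.mem_sdiff, mem_nbU, mem_nbU]
          refine ⟨a3, fun h' => a4 (b2.link (RU.edge h'))⟩
        have hs2 : nbU F (q v1) ⊆ nbU E (q v1) := fun x hx => mem_nbU.2 (hF.sub (mem_nbU.1 hx))
        have h1 := Finset.card_le_card hsub
        have h2 := Finset.card_sdiff_add_card_eq_card hs2
        have h3 := hF.deg (q v1) (hmemA _ _ (hpq v1 (hQm v1 hv1).1).2.1)
        have h4 := hdeg (q v1)
        rw [degL_eq] at h4
        omega)
  -- the contradiction
  set S := insert u0 (LL.biUnion (UK F)) with hS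
  have hdU : ((LL.biUnion (UK F))).card = ∑ v ∈ LL, (UK F v).card := by
    apply Finset.card_biUnion
    intro x hx y hy hne
    refine Finset.disjoint_left.2 ?_
    intro a ha hb
    rw [mem_UK] at ha hb
    exact hne (hpw x hx y hy (ha.link hb))
  have hSc : S.card = 1 + ∑ v ∈ LL, (UK F v).card := by
    rw [hS, Finset.card_insert_of_notMem, hdU, add_comm]
    intro h'
    obtain ⟨x, -, h'⟩ := Finset.mem_biUnion.1 h'
    exact hu0 (hmemA x u0 (mem_UK.1 h'))
  have hΓ : nbhd E S ⊆ LL.biUnion (VK F) := by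
    intro v hv
    unfold nbhd at hv
    obtain ⟨⟨a, b⟩, hab, rfl⟩ := Finset.mem_image.1 hv
    rw [Finset.mem_filter] at hab
    obtain ⟨hE, haS⟩ := hab
    simp only [hS, Finset.mem_insert, Finset.mem_biUnion] at haS
    obtain ⟨y, hy, hyv⟩ := hcl b (by
      rcases haS with rfl | ⟨w, hw, h'⟩
      · exact Or.inl hE
      · exact Or.inr ⟨w, by simpa [hLL] using hw, a, mem_UK.1 h', hE⟩)
    exact Finset.mem_biUnion.2 ⟨y, by simpa [hLL] using hy, mem_VK.2 hyv⟩
  have hΓc : (nbhd E S).card + ∑ v ∈ LL, (UK F v).card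
      ≤ LL.card + h * ∑ v ∈ LL, (UK F v).card := by
    have h1 : (nbhd E S).card ≤ ∑ v ∈ LL, (VK F v).card :=
      (Finset.card_le_card hΓ).trans Finset.card_biUnion_le
    have h2 : ∑ v ∈ LL, (VK F v).card + ∑ v ∈ LL, (UK F v).card
        = LL.card + h * ∑ v ∈ LL, (UK F v).card := by
      rw [← Finset.sum_add_distrib, Finset.sum_congr rfl (fun v _ => hF.toIsFor.card v),
        Finset.sum_add_distrib, Finset.mul_sum]
      simp
    omega
  have hNS := hN S
  rw [hSc] at hNS
  have := Nat.mul_le_mul_left N hΓc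
  nlinarith

lemma exists_val [Fintype U] [Fintype V] {E : Finset (U × V)} {h k e m N : ℕ}
    (hk1 : 1 ≤ k) (hh : 2 ≤ h) (he : 1 ≤ e)
    (hm2 : h * m < k + h) (hm1 : k ≤ h * m) (hNm : N + m = k + 1 + e * m)
    (hdeg : ∀ u, degL E u ≤ h + e)
    (hN : ∀ S : Finset U, N * h * S.card + (e + 1) * S.card ≤ N * (nbhd E S).card + N * S.card)
    (A : Finset U) : ∃ F, IsVal E h k A F := by
  induction A using Finset.induction_on with
  | empty =>
    refine ⟨∅, ⟨?_, by simp, by simp⟩, by simp, ?_⟩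
    · have : mkGraph (∅ : Finset (U × V)) = ⊥ := by
        ext a b
        simp [mkGraph, SimpleGraph.fromRel_adj]
      rw [this]
      exact SimpleGraph.isAcyclic_bot
    · intro v
      have : UK (∅ : Finset (U × V)) v = ∅ := by
        ext u
        simp [mem_UK, not_RU_iso (F := (∅ : Finset (U × V))) (u := u) (by simp) v]
      simp [this]
  | insert u A hu ih =>
    obtain ⟨F, hF⟩ := ih
    exact step hk1 hh he hm2 hm1 hNm hdeg hN hu hF

lemma val_matching [Fintype U] [Fintype V] {E F : Finset (U × V)} {h k : ℕ}
    (hF : IsVal E h k Finset.univ F) : IsSTMatching h (h * k) E F := by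
  refine ⟨hF.sub, hF.acyc, ?_, ?_⟩
  · intro c
    rcases (componentEdges F c).eq_empty_or_nonempty with h0 | ⟨p, hp⟩
    · simp [h0]
    · have hmaps : ∀ x ∈ componentEdges F c, x.1 ∈ UK F p.2 := by
        intro x hx
        unfold componentEdges at hx hp
        rw [Finset.mem_filter] at hx hp
        have h1 : (mkGraph F).Reachable (Sum.inl p.1) (Sum.inl x.1) :=
          SimpleGraph.ConnectedComponent.exact (hp.2.trans hx.2.symm)
        rw [mem_UK]
        exact (RU.edge hp.1).trans h1
      rw [Finset.card_eq_sum_card_fiberwise hmaps]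
      have h2 : ∑ b ∈ UK F p.2, ((componentEdges F c).filter fun a => a.1 = b).card
          ≤ (UK F p.2).card • h := by
        apply Finset.sum_le_card_nsmul
        intro u _
        rw [← hF.deg u (Finset.mem_univ u), ← degL_eq]
        unfold degL componentEdges
        apply Finset.card_le_card
        intro x hx
        simp only [Finset.mem_filter] at hx ⊢
        exact ⟨hx.1.1, hx.2⟩
      refine h2.trans ?_
      rw [smul_eq_mul, mul_comm]
      exact Nat.mul_le_mul_left h (hF.size p.2)
  · intro u
    rw [degL_eq]
    exact hF.deg u (Finset.mem_univ u)

/-- **Theorem 3 (main).** Let `k ≥ 1` and `d > h ≥ 2` and let `G = (U,V,E)` be a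
bipartite graph with `d(u) ≤ d` for all `u ∈ U` and
`|Γ(S)| ≥ (h − 1 + (d − h + 1)/(k + 1 + (d − h − 1)·⌈k/h⌉))·|S|` for every `S ⊆ U`.
Then `G` has an `(h, hk)`-matching. -/
theorem stmt_1 {U V : Type*} [Fintype U] [Fintype V] (k h d : ℕ) (hk : 1 ≤ k)
    (hh : 2 ≤ h) (hd : h < d) (E : Finset (U × V))
    (hdeg : ∀ u : U, degL E u ≤ d)
    (hN : ∀ S : Finset U,
      ((h : ℝ) - 1 +
          ((d : ℝ) - h + 1) /
            ((k : ℝ) + 1 + ((d : ℝ) - h - 1) * (Nat.ceil ((k : ℝ) / (h : ℝ)) : ℝ))) *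
          S.card ≤ ((nbhd E S).card : ℝ)) :
    ∃ F : Finset (U × V), IsSTMatching h (h * k) E F := by

  obtain ⟨e', rfl⟩ : ∃ e', d = h + (e' + 1) := ⟨d - h - 1, by omega⟩
  set m := Nat.ceil ((k : ℝ) / (h : ℝ)) with hm
  have hhpos : (0 : ℝ) < h := by exact_mod_cast (by omega : 0 < h)
  have hm1 : k ≤ h * m := by
    have h1 := Nat.le_ceil ((k : ℝ) / (h : ℝ))
    rw [← hm, div_le_iff₀ hhpos] at h1
    have h2 : k ≤ m * h := by exact_mod_cast h1
    rwa [mul_comm] at h2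
  have hm2 : h * m < k + h := by
    have h1 := Nat.ceil_lt_add_one (a := (k : ℝ) / (h : ℝ)) (by positivity)
    rw [← hm, div_add_one hhpos.ne', lt_div_iff₀ hhpos] at h1
    have h2 : m * h < k + h := by exact_mod_cast h1
    rwa [mul_comm] at h2
  obtain ⟨F, hF⟩ := exists_val (E := E) (h := h) (k := k) (e := e' + 1) (m := m)
    (N := k + 1 + e' * m) hk hh (by omega) hm2 hm1 (by ring) hdeg (by
      intro S
      have h1 := hN S
      have e1 : ((k : ℝ) + 1 + (((h + (e' + 1) : ℕ) : ℝ) - h - 1) * (m : ℝ))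
          = k + 1 + e' * m := by push_cast; ring
      have e2 : (((h + (e' + 1) : ℕ) : ℝ) - h + 1) = e' + 1 + 1 := by push_cast; ring
      rw [e1, e2] at h1
      have hpos : (0 : ℝ) < k + 1 + e' * m := by positivity
      have h2 := mul_le_mul_of_nonneg_left h1 hpos.le
      have h3 : ((k : ℝ) + 1 + e' * m) * (((h : ℝ) - 1 + (e' + 1 + 1) / (k + 1 + e' * m)) * S.card)
          = (k + 1 + e' * m) * h * S.card + (e' + 1 + 1) * S.card
            - (k + 1 + e' * m) * S.card := by
        field_simp
        ring
      rw [h3] at h2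
      have h4 : ((k : ℝ) + 1 + e' * m) * h * S.card + (e' + 1 + 1) * S.card
          ≤ (k + 1 + e' * m) * (nbhd E S).card + (k + 1 + e' * m) * S.card := by linarith
      exact_mod_cast h4) Finset.univ
  exact ⟨F, val_matching hF⟩
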